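/- Let d ≥ 2 and let A := {x ∈ ℝ^d : x_d = 0, or (x₁−3)² + x₂² + ⋯ + x_d² ≤ 1, or (x₁² + x₂² + ⋯ + x_d² ≤ 1 and x_d ≥ 0)}. Then A is not elementary closed semi-algebraic: there exist no m ∈ ℕ and polynomials p₁,…,p_m ∈ ℝ[x₁,…,x_d] with A = (p₁,…,p_m)_{≥0}. -/

import Mathlib

open MvPolynomial

/-!
Restrict the defining polynomials to the plane of the coordinates `u = x₁` and `v = x_d`, and factor
such a restriction as `v ^ k * q` with `q` not divisible by `v`. Near a generic point of the axis
`v = 0` the factor `q` has constant sign. Nonnegativity near the axis inside the disc around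
`(3, 0)` forces `k` to be even, so at a generic point inside the half disc nonnegativity above the
axis extends below it. But the set contains no point just below the half disc.
-/

section

open Filter Topology
open scoped Polynomial Polynomial.Bivariate

section Semialgebraic

variable {ι R : Type*} [CommSemiring R]

/-- An elementary closed semi-algebraic subset of affine space: the common nonnegativity set
`(p₁, …, p_m)_{≥0}` of finitely many polynomials. -/
def IsElementaryClosed [LE R] (S : Set (ι → R)) : Prop :=
  ∃ (m : ℕ) (p : Fin m → MvPolynomial ι R), S = {x | ∀ i, 0 ≤ eval x (p i)}

theorem evalEval_aeval (f : ι → R[X][Y]) (p : MvPolynomial ι R) (u v : R) :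
    (aeval f p).evalEval u v = eval (fun i => (f i).evalEval u v) p := by
  rw [← Polynomial.coe_evalEvalRingHom, map_aeval, eval, coe_eval₂Hom, coe_eval₂Hom]
  congr 1
  ext c
  simp

end Semialgebraic

section Sign

variable {𝕜 : Type*} [Field 𝕜] [LinearOrder 𝕜] [IsStrictOrderedRing 𝕜] [TopologicalSpace 𝕜]
  [OrderTopology 𝕜] {g : 𝕜 → 𝕜}

theorem eventually_nhdsGT_nonneg_pow_mul_iff (hg : ContinuousWithinAt g (Set.Ioi 0) 0)
    (hg0 : g 0 ≠ 0) (k : ℕ) :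
    (∀ᶠ v in 𝓝[>] 0, 0 ≤ v ^ k * g v) ↔ 0 < g 0 := by
  constructor
  · intro h
    refine hg0.symm.lt_of_le (ge_of_tendsto hg ?_)
    filter_upwards [h, self_mem_nhdsWithin] with v hv hv0
    exact nonneg_of_mul_nonneg_right hv (pow_pos hv0 k)
  · intro h
    filter_upwards [Tendsto.eventually_const_lt h hg, self_mem_nhdsWithin] with v hv hv0
    exact mul_nonneg (pow_nonneg (le_of_lt hv0) k) hv.le

theorem eventually_nhds_nonneg_pow_mul_iff (hg : ContinuousAt g 0) (hg0 : g 0 ≠ 0) (k : ℕ) :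
    (∀ᶠ v in 𝓝 0, 0 ≤ v ^ k * g v) ↔ Even k ∧ 0 < g 0 := by
  constructor
  · intro h
    have hpos : 0 < g 0 := (eventually_nhdsGT_nonneg_pow_mul_iff hg.continuousWithinAt hg0 k).1
      (h.filter_mono nhdsWithin_le_nhds)
    refine ⟨Nat.not_odd_iff_even.1 fun hk => ?_, hpos⟩
    obtain ⟨v, ⟨hv, hgv⟩, hv0⟩ := (((h.and (hg.eventually_const_lt hpos)).filter_mono
      nhdsWithin_le_nhds).and (self_mem_nhdsWithin (s := Set.Iio 0))).exists
    exact hv.not_gt (mul_neg_of_neg_of_pos (hk.pow_neg hv0) hgv)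
  · rintro ⟨hk, hpos⟩
    filter_upwards [hg.eventually_const_lt hpos] with v hv
    exact mul_nonneg (hk.pow_nonneg v) hv.le

end Sign

section Bivariate

theorem exists_eq_X_pow_mul_coeff_zero_ne_zero {R : Type*} [CommRing R] {P : R[X]} (hP : P ≠ 0) :
    ∃ (k : ℕ) (Q : R[X]), Q.coeff 0 ≠ 0 ∧ P = Polynomial.X ^ k * Q := by
  obtain ⟨Q, hPQ, hQ⟩ := Polynomial.exists_eq_pow_rootMultiplicity_mul_and_not_dvd P hP 0
  rw [Polynomial.C_0, sub_zero] at hPQ hQ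
  exact ⟨_, Q, fun h => hQ (Polynomial.X_dvd_iff.2 h), hPQ⟩

theorem evalEval_zero_right {R : Type*} [Semiring R] (Q : R[X][Y]) (u : R) :
    Q.evalEval u 0 = (Q.coeff 0).eval u := by
  rw [Polynomial.evalEval, Polynomial.C_0, Polynomial.coeff_zero_eq_eval_zero]

theorem continuous_evalEval_right {R : Type*} [CommSemiring R] [TopologicalSpace R]
    [IsTopologicalSemiring R] (Q : R[X][Y]) (u : R) : Continuous (Q.evalEval u) := by
  simp only [← Polynomial.map_evalRingHom_eval]
  exact (Q.map (Polynomial.evalRingHom u)).continuous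

theorem eventually_cofinite_eval_ne_zero {R : Type*} [CommRing R] [IsDomain R] {r : R[X]}
    (hr : r ≠ 0) : ∀ᶠ u in cofinite, r.eval u ≠ 0 := by
  simpa only [eventually_cofinite, not_not] using! Polynomial.finite_setOfPred_isRoot hr

variable {𝕜 : Type*} [Field 𝕜] [LinearOrder 𝕜] [IsStrictOrderedRing 𝕜] [TopologicalSpace 𝕜]
  [OrderTopology 𝕜]

theorem eventually_cofinite_evalEval_nonneg_nhds_of_nhdsGT {P : 𝕜[X][Y]}
    (hP : ∃ᶠ u in cofinite, ∀ᶠ v in 𝓝 0, 0 ≤ P.evalEval u v) :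
    ∀ᶠ u in cofinite, (∀ᶠ v in 𝓝[>] 0, 0 ≤ P.evalEval u v) →
      ∀ᶠ v in 𝓝 0, 0 ≤ P.evalEval u v := by
  rcases eq_or_ne P 0 with rfl | hP0
  · simp
  obtain ⟨k, Q, hQ, rfl⟩ := exists_eq_X_pow_mul_coeff_zero_ne_zero hP0
  simp only [Polynomial.evalEval_mul, Polynomial.evalEval_pow, Polynomial.evalEval_X] at hP ⊢
  have hcont (u : 𝕜) : ContinuousAt (Q.evalEval u) 0 := (continuous_evalEval_right Q u).continuousAt
  have hgeneric : ∀ᶠ u in cofinite, Q.evalEval u 0 ≠ 0 := by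
    simpa only [evalEval_zero_right] using eventually_cofinite_eval_ne_zero hQ
  have hk : Even k := by
    obtain ⟨u, hu, hQu⟩ := (hP.and_eventually hgeneric).exists
    exact ((eventually_nhds_nonneg_pow_mul_iff (hcont u) hQu k).1 hu).1
  filter_upwards [hgeneric] with u hQu hu
  exact (eventually_nhds_nonneg_pow_mul_iff (hcont u) hQu k).2
    ⟨hk, (eventually_nhdsGT_nonneg_pow_mul_iff (hcont u).continuousWithinAt hQu k).1 hu⟩

theorem IsElementaryClosed.eventually_cofinite_mem_nhds_of_nhdsGT {ι : Type*} {S : Set (ι → 𝕜)}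
    (hS : IsElementaryClosed S) (f : ι → 𝕜[X][Y])
    (hf : ∃ᶠ u in cofinite, ∀ᶠ v in 𝓝 0, (fun i => (f i).evalEval u v) ∈ S) :
    ∀ᶠ u in cofinite, (∀ᶠ v in 𝓝[>] 0, (fun i => (f i).evalEval u v) ∈ S) →
      ∀ᶠ v in 𝓝 0, (fun i => (f i).evalEval u v) ∈ S := by
  obtain ⟨m, p, rfl⟩ := hS
  simp only [Set.mem_ofPred_eq, ← evalEval_aeval, eventually_all] at hf ⊢
  have hgeneric := eventually_all.2 fun i =>
    eventually_cofinite_evalEval_nonneg_nhds_of_nhdsGT (hf.mono fun u hu => hu i)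
  filter_upwards [hgeneric] with u hu hpos i
  exact hu i (hpos i)

end Bivariate

section Counterexample

variable {ι : Type*} [DecidableEq ι] {a b : ι}

theorem sum_single_add_single_sq {R : Type*} [CommSemiring R] (hab : a ≠ b) (s : Finset ι)
    (u v : R) : ∑ i ∈ s, (Pi.single a u + Pi.single b v : ι → R) i ^ 2 =
      (if a ∈ s then u ^ 2 else 0) + if b ∈ s then v ^ 2 else 0 := by
  have hsq (i : ι) : (Pi.single a u + Pi.single b v : ι → R) i ^ 2 =
      (if i = a then u ^ 2 else 0) + if i = b then v ^ 2 else 0 := by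
    by_cases hia : i = a
    · simp [hia, hab]
    · by_cases hib : i = b <;> simp [hia, hib, hab.symm]
  simp only [hsq, Finset.sum_add_distrib, Finset.sum_ite_eq']

theorem evalEval_single_add_single {R : Type*} [CommSemiring R] (a b : ι) (u v : R) :
    (fun i => ((Pi.single a (Polynomial.C Polynomial.X) + Pi.single b Polynomial.X :
      ι → R[X][Y]) i).evalEval u v) = Pi.single a u + Pi.single b v := by
  ext i
  simp [Pi.single_apply, apply_ite (Polynomial.evalEval u v), Polynomial.evalEval_C]

variable [Fintype ι]

/-- The union of the hyperplane `x_b = 0`, the unit ball around the point `3` of the `a`-axis, and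
the half `x_b ≥ 0` of the unit ball around the origin. The set of the theorem is the case in which
`a` is the first and `b` the last coordinate. -/
def hyperplaneBallHalfBall (R : Type*) [CommRing R] [LE R] (a b : ι) : Set (ι → R) :=
  {x | x b = 0 ∨ (x a - 3) ^ 2 + ∑ i ∈ Finset.univ.erase a, x i ^ 2 ≤ 1 ∨
    ((∑ i, x i ^ 2) ≤ 1 ∧ 0 ≤ x b)}

theorem single_add_single_mem_hyperplaneBallHalfBall_iff {R : Type*} [CommRing R] [LE R]
    (hab : a ≠ b) {u v : R} :
    Pi.single a u + Pi.single b v ∈ hyperplaneBallHalfBall R a b ↔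
      v = 0 ∨ (u - 3) ^ 2 + v ^ 2 ≤ 1 ∨ (u ^ 2 + v ^ 2 ≤ 1 ∧ 0 ≤ v) := by
  simp only [hyperplaneBallHalfBall, Set.mem_ofPred_eq, sum_single_add_single_sq hab]
  simp [hab, hab.symm]

variable {𝕜 : Type*} [Field 𝕜] [LinearOrder 𝕜] [IsStrictOrderedRing 𝕜]

theorem single_add_single_notMem_hyperplaneBallHalfBall (hab : a ≠ b) {u v : 𝕜} (hu : u < 1)
    (hv : v < 0) : Pi.single a u + Pi.single b v ∉ hyperplaneBallHalfBall 𝕜 a b := by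
  rw [single_add_single_mem_hyperplaneBallHalfBall_iff hab]
  rintro (h | h | h)
  · exact hv.ne h
  · nlinarith [sq_nonneg v]
  · exact hv.not_ge h.2

section Topology

variable [TopologicalSpace 𝕜] [OrderTopology 𝕜]

theorem eventually_nhds_zero_add_sq_lt {c r : 𝕜} (h : c < r) :
    ∀ᶠ v in 𝓝 (0 : 𝕜), c + v ^ 2 < r := by
  have hcont : ContinuousAt (fun v : 𝕜 => c + v ^ 2) 0 := by fun_prop
  exact hcont.eventually_lt_const (by simpa using h)

theorem eventually_nhds_single_add_single_mem_hyperplaneBallHalfBall (hab : a ≠ b) {u : 𝕜}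
    (hu : u ∈ Set.Ioo 2 4) :
    ∀ᶠ v in 𝓝 0, Pi.single a u + Pi.single b v ∈ hyperplaneBallHalfBall 𝕜 a b := by
  have hu_sq : (u - 3) ^ 2 < 1 := by nlinarith [hu.1, hu.2]
  filter_upwards [eventually_nhds_zero_add_sq_lt hu_sq] with v hv
  exact (single_add_single_mem_hyperplaneBallHalfBall_iff hab).2 (.inr (.inl hv.le))

theorem eventually_nhdsGT_single_add_single_mem_hyperplaneBallHalfBall (hab : a ≠ b) {u : 𝕜}
    (hu : u ∈ Set.Ioo (-1) 1) :
    ∀ᶠ v in 𝓝[>] 0, Pi.single a u + Pi.single b v ∈ hyperplaneBallHalfBall 𝕜 a b := by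
  have hu_sq : u ^ 2 < 1 := by nlinarith [hu.1, hu.2]
  filter_upwards [(eventually_nhds_zero_add_sq_lt hu_sq).filter_mono nhdsWithin_le_nhds,
    self_mem_nhdsWithin] with v hv hv0
  exact (single_add_single_mem_hyperplaneBallHalfBall_iff hab).2
    (.inr (.inr ⟨hv.le, le_of_lt hv0⟩))

end Topology

theorem not_elementary_closed_general (hab : a ≠ b) :
    ¬ IsElementaryClosed (hyperplaneBallHalfBall 𝕜 a b) := by
  intro hA
  let _ : TopologicalSpace 𝕜 := Preorder.topology 𝕜
  have : OrderTopology 𝕜 := ⟨rfl⟩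
  have hball : ∃ᶠ u : 𝕜 in cofinite, u ∈ Set.Ioo 2 4 :=
    frequently_cofinite_iff_infinite.2 (Set.Ioo_infinite (by norm_num))
  have hhalfBall : ∃ᶠ u : 𝕜 in cofinite, u ∈ Set.Ioo (-1) 1 :=
    frequently_cofinite_iff_infinite.2 (Set.Ioo_infinite (by norm_num))
  have hgeneric := hA.eventually_cofinite_mem_nhds_of_nhdsGT
    (Pi.single a (Polynomial.C Polynomial.X) + Pi.single b Polynomial.X)
  simp only [evalEval_single_add_single] at hgeneric
  obtain ⟨u, hu, hmem_of_nhdsGT⟩ := (hhalfBall.and_eventually <| hgeneric <| hball.mono fun _ =>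
    eventually_nhds_single_add_single_mem_hyperplaneBallHalfBall hab).exists
  have hmem := hmem_of_nhdsGT
    (eventually_nhdsGT_single_add_single_mem_hyperplaneBallHalfBall hab hu)
  obtain ⟨v, hv, hv0⟩ := ((hmem.filter_mono nhdsWithin_le_nhds).and
    (self_mem_nhdsWithin (s := Set.Iio 0))).exists
  exact single_add_single_notMem_hyperplaneBallHalfBall hab hu.2 hv0 hv

end Counterexample

end

/-- The set `A = {x ∈ ℝ^d : x_d = 0, or (x₁−3)² + x₂² + ⋯ + x_d² ≤ 1, or
(x₁² + ⋯ + x_d² ≤ 1 and x_d ≥ 0)}` is a closed semi-algebraic set which is not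
elementary closed: it admits no representation `A = (p₁,…,p_m)_{≥0}`. -/
theorem not_elementary_closed
    (d : ℕ) (hd : 2 ≤ d)
    (A : Set (EuclideanSpace ℝ (Fin d)))
    (hA : A = {x : EuclideanSpace ℝ (Fin d) |
      x ⟨d - 1, by omega⟩ = 0 ∨
      (x ⟨0, by omega⟩ - 3) ^ 2
          + ∑ i ∈ Finset.univ.erase (⟨0, by omega⟩ : Fin d), x i ^ 2 ≤ 1 ∨
      ((∑ i, x i ^ 2) ≤ 1 ∧ 0 ≤ x ⟨d - 1, by omega⟩)}) :
    ¬ ∃ (m : ℕ) (p : Fin m → MvPolynomial (Fin d) ℝ),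
        A = {x : EuclideanSpace ℝ (Fin d) | ∀ i, 0 ≤ eval x (p i)} := by
  rintro ⟨m, p, hp⟩
  have first_ne_last : (⟨0, by omega⟩ : Fin d) ≠ ⟨d - 1, by omega⟩ := Fin.ne_of_val_ne (by grind)
  exact not_elementary_closed_general (𝕜 := ℝ) first_ne_last
    ⟨m, p, Set.ext fun x => Set.ext_iff.1 (hA.symm.trans hp) (WithLp.toLp 2 x)⟩
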